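/- arXiv:2509.06575 — 2 statements merged into one kernel-verified Lean document; each statement's English description precedes it below -/
import Mathlib

section
/- Deterministic form of Lemma 3.3 (low-rank outliers bound the estimated rank): Let B̃ ∈ ℝ^{p×T} with its columns indexed by a partition {1,…,T} = S ⊔ S^c. Suppose the submatrix of S-columns of B̃ equals B̄_S with rank(B̄_S) = r, and the submatrix of S^c-columns equals B̄_{S^c} + Ñ where rank(B̄_{S^c}) = r_out and ‖Ñ‖ ≤ (3/4)τ for some τ > 0. Let r_∩ = dim(col(B̄_S) ∩ col(B̄_{S^c})), the dimension of the intersection of the two column spaces. Then σ_j(B̃) ≤ (3/4)τ for all j > r + r_out − r_∩. Consequently, if B̂ = B̃ + N with ‖N‖ < τ/4, then max{k : σ_k(B̂) ≥ τ} ≤ r + r_out − r_∩. -/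
open Matrix
open scoped Matrix.Norms.L2Operator Classical

/-- `sv M k` is the `k`-th largest singular value of `M` (1-indexed), characterized as the
distance (in ℓ²→ℓ² operator norm) from `M` to the set of matrices of rank `< k`.
In particular `sv M k = 0` whenever `k` exceeds `min` of the dimensions. -/
noncomputable def sv {m n : Type*} [Fintype m] [Fintype n] [DecidableEq n]
    (M : Matrix m n ℝ) (k : ℕ) : ℝ :=
  sInf {c : ℝ | ∃ L : Matrix m n ℝ, L.rank < k ∧ ‖M - L‖ = c}

/-!
The matrix `A + B + E` lies at distance `‖E‖` from `A + B`, whose column space is contained in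
`col A + col B`, a space of dimension `rank A + rank B - dim (col A ∩ col B)`. Since a singular
value is the distance to the matrices of smaller rank, all singular values of larger index are at
most `‖E‖`, and adding `N` increases each of them by at most `‖N‖`.
-/

section Rank

open LinearMap (range)
open Module (finrank)

lemma finrank_range_add_add_finrank_inf_le {K V W : Type*} [DivisionRing K] [AddCommGroup V]
    [Module K V] [FiniteDimensional K V] [AddCommGroup W] [Module K W] (f g : V →ₗ[K] W) :
    finrank K (range (f + g)) + finrank K ↥(range f ⊓ range g) ≤
      finrank K (range f) + finrank K (range g) := by
  have range_add_le : range (f + g) ≤ range f ⊔ range g := by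
    rintro _ ⟨x, rfl⟩
    exact Submodule.add_mem_sup ⟨x, rfl⟩ ⟨x, rfl⟩
  rw [← Submodule.finrank_sup_add_finrank_inf_eq (range f)]
  exact Nat.add_le_add_right (Submodule.finrank_mono range_add_le) _

lemma rank_add_le_sub_finrank_inf {K m n : Type*} [Field K] [Fintype n] (A B : Matrix m n K) :
    (A + B).rank ≤
      A.rank + B.rank - finrank K ↥(range A.mulVecLin ⊓ range B.mulVecLin) := by
  apply Nat.le_sub_of_add_le
  rw [Matrix.rank, mulVecLin_add]
  exact finrank_range_add_add_finrank_inf_le A.mulVecLin B.mulVecLin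

end Rank

lemma eq_add_add_of_eqOn_cols {α m n : Type*} [AddZeroClass α] {M A B E : Matrix m n α} {S : Set n}
    (hA : ∀ i, ∀ t ∉ S, A i t = 0) (hB : ∀ i, ∀ t ∈ S, B i t = 0) (hE : ∀ i, ∀ t ∈ S, E i t = 0)
    (hM : ∀ i, ∀ t ∈ S, M i t = A i t) (hM' : ∀ i, ∀ t ∉ S, M i t = B i t + E i t) :
    M = A + B + E := by
  ext i t
  by_cases ht : t ∈ S
  · simp [hM i t ht, hB i t ht, hE i t ht]
  · simp [hM' i t ht, hA i t ht]

section SingularValues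

variable {m n : Type*} [Fintype m] [Fintype n] [DecidableEq n]

lemma sv_le_norm_sub {M L : Matrix m n ℝ} {k : ℕ} (hL : L.rank < k) : sv M k ≤ ‖M - L‖ := by
  refine csInf_le ⟨0, ?_⟩ ⟨L, hL, rfl⟩
  rintro _ ⟨L', -, rfl⟩
  exact norm_nonneg _

lemma sv_add_le_norm_of_rank_lt {L : Matrix m n ℝ} {k : ℕ} (hL : L.rank < k) (E : Matrix m n ℝ) :
    sv (L + E) k ≤ ‖E‖ := by
  simpa only [add_sub_cancel_left] using sv_le_norm_sub (M := L + E) hL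

lemma sv_zero_right (M : Matrix m n ℝ) : sv M 0 = 0 := by
  simp [sv]

lemma sv_add_le_sv_add_norm (M N : Matrix m n ℝ) (k : ℕ) : sv (M + N) k ≤ sv M k + ‖N‖ := by
  obtain rfl | hk := k.eq_zero_or_pos
  · simp only [sv_zero_right, zero_add, norm_nonneg]
  rw [← sub_le_iff_le_add]
  refine le_csInf ⟨_, 0, by rwa [Matrix.rank_zero], rfl⟩ ?_
  rintro _ ⟨L, hL, rfl⟩
  rw [sub_le_iff_le_add]
  calc sv (M + N) k ≤ ‖M + N - L‖ := sv_le_norm_sub hL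
    _ = ‖M - L + N‖ := by rw [add_sub_right_comm]
    _ ≤ ‖M - L‖ + ‖N‖ := norm_add_le _ _

theorem low_rank_outliers_bound_estimated_rank_general (A B E N : Matrix m n ℝ) {τ : ℝ}
    (hEN : ‖E‖ + ‖N‖ < τ) :
    let d := A.rank + B.rank -
      Module.finrank ℝ ↥(LinearMap.range A.mulVecLin ⊓ LinearMap.range B.mulVecLin)
    (∀ j, d < j → sv (A + B + E) j ≤ ‖E‖) ∧ ∀ k, τ ≤ sv (A + B + E + N) k → k ≤ d := by
  intro d
  have sv_le : ∀ j, d < j → sv (A + B + E) j ≤ ‖E‖ := fun j hj =>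
    sv_add_le_norm_of_rank_lt ((rank_add_le_sub_finrank_inf A B).trans_lt hj) E
  refine ⟨sv_le, fun k hk => ?_⟩
  by_contra! hdk
  have := sv_add_le_sv_add_norm (A + B + E) N k
  linarith [sv_le k hdk]

end SingularValues

/-- Deterministic form of Lemma 3.3 (low-rank outliers bound the estimated rank).
The columns of `B̃` are indexed by the partition `{1,…,T} = S ⊔ Sᶜ`; the matrices
`B̄_S`, `B̄_{Sᶜ}` and `Ñ` are encoded as `p × T` matrices whose columns vanish off `S`
(resp. off `Sᶜ`), so that the `S`-columns of `B̃` are those of `B̄_S` and the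
`Sᶜ`-columns of `B̃` are those of `B̄_{Sᶜ} + Ñ`. With `rank B̄_S = r`,
`rank B̄_{Sᶜ} = r_out`, `‖Ñ‖ ≤ (3/4)τ`, and
`r_∩ = dim (col B̄_S ⊓ col B̄_{Sᶜ})`, every singular value `σ_j(B̃)` with
`j > r + r_out − r_∩` is at most `(3/4)τ`; consequently, if `B̂ = B̃ + N` with
`‖N‖ < τ/4`, then `max{k ∈ {1,…,T} : σ_k(B̂) ≥ τ} ≤ r + r_out − r_∩`. -/
theorem low_rank_outliers_bound_estimated_rank
    {p T : ℕ} (Btil Bhat N : Matrix (Fin p) (Fin T) ℝ)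
    (S : Finset (Fin T))
    (BS BSc Ntil : Matrix (Fin p) (Fin T) ℝ)
    (τ : ℝ) (hτ : 0 < τ)
    (r rout rcap : ℕ)
    (hBS0 : ∀ i, ∀ t ∉ S, BS i t = 0)
    (hBSc0 : ∀ i, ∀ t ∈ S, BSc i t = 0)
    (hNtil0 : ∀ i, ∀ t ∈ S, Ntil i t = 0)
    (hScols : ∀ i, ∀ t ∈ S, Btil i t = BS i t)
    (hSccols : ∀ i, ∀ t ∉ S, Btil i t = BSc i t + Ntil i t)
    (hrankS : BS.rank = r)
    (hrankSc : BSc.rank = rout)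
    (hNtil : ‖Ntil‖ ≤ (3 / 4) * τ)
    (hrcap : rcap =
      Module.finrank ℝ ↥(LinearMap.range BS.mulVecLin ⊓ LinearMap.range BSc.mulVecLin))
    (hBhat : Bhat = Btil + N) (hN : ‖N‖ < τ / 4) :
    (∀ j : ℕ, r + rout - rcap < j → sv Btil j ≤ (3 / 4) * τ) ∧
      ((Finset.Icc 1 T).filter (fun k => τ ≤ sv Bhat k)).sup id ≤ r + rout - rcap := by
  obtain rfl := eq_add_add_of_eqOn_cols (S := (S : Set (Fin T))) hBS0 hBSc0 hNtil0 hScols hSccols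
  subst hrankS hrankSc hrcap hBhat
  obtain ⟨sv_le, index_le⟩ := low_rank_outliers_bound_estimated_rank_general BS BSc Ntil N
    (τ := τ) (by linarith)
  exact ⟨fun j hj => (sv_le j hj).trans hNtil,
    Finset.sup_le fun k hk => index_le k (Finset.mem_filter.mp hk).2⟩
end

section
/- Estimation-error bound for least squares restricted to an estimated subspace: Let X ∈ ℝ^{n×p}, β* ∈ ℝ^p, ε ∈ ℝ^n, y = Xβ* + ε, and Σ̂ = (1/n)XᵀX. Let Â ∈ ℝ^{p×k} have orthonormal columns with ÂᵀΣ̂Â invertible, and θ̂ = (ÂᵀΣ̂Â)^{-1}·(1/n)·ÂᵀXᵀy. Then ‖Âθ̂ − ÂÂᵀβ*‖₂ ≤ ‖(ÂᵀΣ̂Â)^{-1}ÂᵀΣ̂‖·‖(I_p − ÂÂᵀ)β*‖₂ + ‖(ÂᵀΣ̂Â)^{-1}·(1/n)·ÂᵀXᵀε‖₂, and consequently ‖Âθ̂ − β*‖₂ ≤ (1 + ‖(ÂᵀΣ̂Â)^{-1}ÂᵀΣ̂‖)·‖(I_p − ÂÂᵀ)β*‖₂ + ‖(ÂᵀΣ̂Â)^{-1}·(1/n)·ÂᵀXᵀε‖₂.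 -/
open Matrix
open scoped Matrix.Norms.L2Operator Classical

/-- The Euclidean (`ℓ²`) norm of a finitely-indexed real vector. -/
noncomputable def enorm {ι : Type*} [Fintype ι] (x : ι → ℝ) : ℝ :=
  Real.sqrt (∑ i, x i ^ 2)

/-!
The matrix `G = (ÂᵀΣ̂Â)⁻¹ÂᵀΣ̂` is a left inverse of `Â`, and `θ̂ = Gβ* + η` with
`η = (ÂᵀΣ̂Â)⁻¹·(1/n)·ÂᵀXᵀε`. Since `GÂ = 1`, the parts of `Âθ̂` and `ÂÂᵀβ*` coming from the
component `ÂÂᵀβ*` of `β*` cancel, leaving `Âθ̂ - ÂÂᵀβ* = Â(G(1 - ÂÂᵀ)β* + η)`. As `Â` does not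
increase Euclidean norms, both bounds follow from the triangle inequality.
-/

section LeftInverse

variable {R k p : Type*} [Fintype k] [Fintype p] [DecidableEq k]

theorem inv_mul_mul_mul_eq_one [CommRing R] {A : Matrix p k R} {B : Matrix k p R}
    {S : Matrix p p R} (h : IsUnit (B * S * A)) : (B * S * A)⁻¹ * B * S * A = 1 := by
  simpa only [Matrix.mul_assoc] using
    nonsing_inv_mul (B * S * A) ((isUnit_iff_isUnit_det _).mp h)

theorem mulVec_sub_mul_mulVec_of_mul_eq_one [Ring R] [DecidableEq p]
    {A : Matrix p k R} {G : Matrix k p R} (hGA : G * A = 1) (B : Matrix k p R)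
    (β : p → R) (η : k → R) :
    A *ᵥ (G *ᵥ β + η) - (A * B) *ᵥ β = A *ᵥ (G *ᵥ ((1 - A * B) *ᵥ β) + η) := by
  have hG : G * (1 - A * B) = G - B := by
    rw [Matrix.mul_sub, Matrix.mul_one, ← Matrix.mul_assoc, hGA, Matrix.one_mul]
  rw [mulVec_mulVec, hG, ← mulVec_mulVec β A B, ← mulVec_sub, sub_mulVec, add_sub_right_comm]

end LeftInverse

theorem inv_mulVec_mulVec_mulVec_add {R k n p : Type*} [CommRing R] [Fintype k] [Fintype n]
    [Fintype p] [DecidableEq k] (M : Matrix k k R) (B : Matrix k p R) (W : Matrix p n R)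
    (X : Matrix n p R) (β : p → R) (ε : n → R) :
    M⁻¹ *ᵥ ((B * W) *ᵥ (X *ᵥ β + ε)) =
      (M⁻¹ * B * (W * X)) *ᵥ β + M⁻¹ *ᵥ ((B * W) *ᵥ ε) := by
  simp only [mulVec_add, mulVec_mulVec, Matrix.mul_assoc]

section EuclideanNorm

open WithLp (toLp)

variable {𝕜 k n p : Type*} [RCLike 𝕜] [Fintype k] [Fintype n] [Fintype p]
  [DecidableEq k]

theorem l2_opNorm_le_one_of_conjTranspose_mul_self_eq_one {A : Matrix p k 𝕜}
    (hA : Aᴴ * A = 1) : ‖A‖ ≤ 1 := by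
  have hone : ‖(1 : Matrix k k 𝕜)‖ ≤ 1 := IsStarProjection.norm_le _ (.one _)
  rw [← hA, l2_opNorm_conjTranspose_mul_self, ← sq] at hone
  exact (sq_le_one_iff₀ (norm_nonneg A)).mp hone

variable [DecidableEq p]

theorem norm_toLp_mulVec_add_sub_le_of_mul_eq_one {A : Matrix p k 𝕜} {G : Matrix k p 𝕜}
    (hA : ‖A‖ ≤ 1) (hGA : G * A = 1) (B : Matrix k p 𝕜) (β : p → 𝕜) (η : k → 𝕜) :
    ‖toLp 2 (A *ᵥ (G *ᵥ β + η) - (A * B) *ᵥ β)‖ ≤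
      ‖G‖ * ‖toLp 2 ((1 - A * B) *ᵥ β)‖ + ‖toLp 2 η‖ := by
  set r := (1 - A * B) *ᵥ β
  calc ‖toLp 2 (A *ᵥ (G *ᵥ β + η) - (A * B) *ᵥ β)‖
      = ‖toLp 2 (A *ᵥ (G *ᵥ r + η))‖ := by rw [mulVec_sub_mul_mulVec_of_mul_eq_one hGA]
    _ ≤ ‖A‖ * ‖toLp 2 (G *ᵥ r + η)‖ := l2_opNorm_mulVec A (toLp 2 (G *ᵥ r + η))
    _ ≤ ‖toLp 2 (G *ᵥ r + η)‖ := mul_le_of_le_one_left (norm_nonneg _) hA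
    _ ≤ ‖toLp 2 (G *ᵥ r)‖ + ‖toLp 2 η‖ := norm_add_le (toLp 2 (G *ᵥ r)) (toLp 2 η)
    _ ≤ ‖G‖ * ‖toLp 2 r‖ + ‖toLp 2 η‖ := by
      gcongr
      exact l2_opNorm_mulVec G (toLp 2 r)

theorem norm_toLp_sub_le_add_norm_one_sub_mulVec (P : Matrix p p 𝕜) (v β : p → 𝕜) :
    ‖toLp 2 (v - β)‖ ≤ ‖toLp 2 (v - P *ᵥ β)‖ + ‖toLp 2 ((1 - P) *ᵥ β)‖ := by
  rw [sub_mulVec, one_mulVec]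
  simpa only [WithLp.toLp_sub, norm_sub_rev (toLp 2 β)] using
    norm_sub_le_norm_sub_add_norm_sub (toLp 2 v) (toLp 2 (P *ᵥ β)) (toLp 2 β)

theorem restricted_least_squares_error_bound_general
    (c : 𝕜) (X : Matrix n p 𝕜) (β : p → 𝕜) (ε y : n → 𝕜) (hy : y = X *ᵥ β + ε)
    (S : Matrix p p 𝕜) (hS : S = c • (Xᴴ * X)) (A : Matrix p k 𝕜) (hA : ‖A‖ ≤ 1)
    (hinv : IsUnit (Aᴴ * S * A)) (θ : k → 𝕜)
    (hθ : θ = (Aᴴ * S * A)⁻¹ *ᵥ (c • (Aᴴ * Xᴴ) *ᵥ y)) :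
    ‖toLp 2 (A *ᵥ θ - (A * Aᴴ) *ᵥ β)‖ ≤
        ‖(Aᴴ * S * A)⁻¹ * Aᴴ * S‖ * ‖toLp 2 ((1 - A * Aᴴ) *ᵥ β)‖ +
          ‖toLp 2 ((Aᴴ * S * A)⁻¹ *ᵥ (c • (Aᴴ * Xᴴ) *ᵥ ε))‖ ∧
      ‖toLp 2 (A *ᵥ θ - β)‖ ≤
        (1 + ‖(Aᴴ * S * A)⁻¹ * Aᴴ * S‖) * ‖toLp 2 ((1 - A * Aᴴ) *ᵥ β)‖ +
          ‖toLp 2 ((Aᴴ * S * A)⁻¹ *ᵥ (c • (Aᴴ * Xᴴ) *ᵥ ε))‖ := by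
  set G := (Aᴴ * S * A)⁻¹ * Aᴴ * S with hG
  set η := (Aᴴ * S * A)⁻¹ *ᵥ (c • (Aᴴ * Xᴴ) *ᵥ ε) with hη
  have hθ_eq : θ = G *ᵥ β + η := by
    simpa only [← hS, hy, hG, hη, hθ, Matrix.mul_smul, Matrix.smul_mul, smul_mulVec] using
      inv_mulVec_mulVec_mulVec_add (Aᴴ * S * A) Aᴴ (c • Xᴴ) X β ε
  have hfirst : ‖toLp 2 (A *ᵥ θ - (A * Aᴴ) *ᵥ β)‖ ≤
      ‖G‖ * ‖toLp 2 ((1 - A * Aᴴ) *ᵥ β)‖ + ‖toLp 2 η‖ := by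
    rw [hθ_eq]
    exact norm_toLp_mulVec_add_sub_le_of_mul_eq_one hA (inv_mul_mul_mul_eq_one hinv) Aᴴ β η
  refine ⟨hfirst, ?_⟩
  linarith [norm_toLp_sub_le_add_norm_one_sub_mulVec (A * Aᴴ) (A *ᵥ θ) β]

end EuclideanNorm

theorem enorm_eq_norm_toLp {ι : Type*} [Fintype ι] (x : ι → ℝ) :
    _root_.enorm x = ‖WithLp.toLp 2 x‖ := by
  simp only [_root_.enorm, EuclideanSpace.norm_eq, Real.norm_eq_abs, sq_abs]

/-- Estimation-error bound for least squares restricted to an estimated subspace: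
with `y = Xβ* + ε`, `Σ̂ = (1/n)XᵀX`, `Â` having orthonormal columns and `ÂᵀΣ̂Â`
invertible, and `θ̂ = (ÂᵀΣ̂Â)⁻¹·(1/n)·ÂᵀXᵀy`,
`‖Âθ̂ − ÂÂᵀβ*‖₂ ≤ ‖(ÂᵀΣ̂Â)⁻¹ÂᵀΣ̂‖·‖(I_p − ÂÂᵀ)β*‖₂ + ‖(ÂᵀΣ̂Â)⁻¹·(1/n)·ÂᵀXᵀε‖₂`,
and consequently
`‖Âθ̂ − β*‖₂ ≤ (1 + ‖(ÂᵀΣ̂Â)⁻¹ÂᵀΣ̂‖)·‖(I_p − ÂÂᵀ)β*‖₂ + ‖(ÂᵀΣ̂Â)⁻¹·(1/n)·ÂᵀXᵀε‖₂`. -/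
theorem restricted_least_squares_error_bound
    {n p k : ℕ} (hn : 0 < n)
    (X : Matrix (Fin n) (Fin p) ℝ) (βstar : Fin p → ℝ) (ε : Fin n → ℝ)
    (y : Fin n → ℝ) (hy : y = X.mulVec βstar + ε)
    (Sighat : Matrix (Fin p) (Fin p) ℝ) (hSig : Sighat = (n : ℝ)⁻¹ • (X.transpose * X))
    (Ahat : Matrix (Fin p) (Fin k) ℝ) (hA : Ahat.transpose * Ahat = 1)
    (hinv : IsUnit (Ahat.transpose * Sighat * Ahat))
    (θhat : Fin k → ℝ)
    (hθ : θhat = (Ahat.transpose * Sighat * Ahat)⁻¹.mulVec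
      ((n : ℝ)⁻¹ • (Ahat.transpose * X.transpose).mulVec y)) :
    _root_.enorm (Ahat.mulVec θhat - (Ahat * Ahat.transpose).mulVec βstar) ≤
        ‖(Ahat.transpose * Sighat * Ahat)⁻¹ * Ahat.transpose * Sighat‖ *
            _root_.enorm ((1 - Ahat * Ahat.transpose).mulVec βstar) +
          _root_.enorm ((Ahat.transpose * Sighat * Ahat)⁻¹.mulVec
            ((n : ℝ)⁻¹ • (Ahat.transpose * X.transpose).mulVec ε)) ∧
      _root_.enorm (Ahat.mulVec θhat - βstar) ≤
        (1 + ‖(Ahat.transpose * Sighat * Ahat)⁻¹ * Ahat.transpose * Sighat‖) *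
            _root_.enorm ((1 - Ahat * Ahat.transpose).mulVec βstar) +
          _root_.enorm ((Ahat.transpose * Sighat * Ahat)⁻¹.mulVec
            ((n : ℝ)⁻¹ • (Ahat.transpose * X.transpose).mulVec ε)) := by
  simp only [enorm_eq_norm_toLp, ← conjTranspose_eq_transpose_of_trivial] at *
  exact restricted_least_squares_error_bound_general _ X βstar ε y hy Sighat hSig Ahat
    (l2_opNorm_le_one_of_conjTranspose_mul_self_eq_one hA) hinv θhat hθ
end
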